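/- A real γ ∈ (0,1) is computably approximable and covered by some Solovay test (i.e., is c.a. and not Martin-Löf random) if and only if γ is covered by a converging Solovay test. -/

import Mathlib

open Filter

/-- A computable approximation of a real `α`: a computable sequence of
rationals in `[0,1]` converging to `α`. -/
def IsCompApprox (a : ℕ → ℚ) (α : ℝ) : Prop :=
  Computable a ∧ (∀ s, a s ∈ Set.Icc (0 : ℚ) 1) ∧
    Tendsto (fun s => (a s : ℝ)) atTop (nhds α)

/-- A d.c.e. approximation: a computable approximation with bounded variation. -/
def IsDCEApprox (a : ℕ → ℚ) (α : ℝ) : Prop :=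
  IsCompApprox a α ∧ Summable (fun s => |(a (s + 1) : ℝ) - (a s : ℝ)|)

/-- A computable order: a nondecreasing unbounded computable function. -/
def IsComputableOrder (f : ℕ → ℕ) : Prop :=
  Computable f ∧ Monotone f ∧ Tendsto f atTop atTop

/-- The liminf (in the extended reals) of `|(α - a (f s)) / (α - a s)|`. -/
noncomputable def speedLiminf (a : ℕ → ℚ) (f : ℕ → ℕ) (α : ℝ) : EReal :=
  Filter.liminf (fun s => ((|(α - (a (f s) : ℝ)) / (α - (a s : ℝ))| : ℝ) : EReal)) atTop

/-- A computable approximation `a` of `α` is `ρ`-speedable. -/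
def IsRhoSpeedable (a : ℕ → ℚ) (α : ℝ) (ρ : ℚ) : Prop :=
  (∃ q : ℚ, α = (q : ℝ)) ∨
    ∃ f, IsComputableOrder f ∧ speedLiminf a f α ≤ (((ρ : ℝ) : EReal))

/-- A computable approximation is speedable if it is `ρ`-speedable for some rational
`ρ ∈ [0,1)`. -/
def IsSpeedable (a : ℕ → ℚ) (α : ℝ) : Prop :=
  ∃ ρ : ℚ, 0 ≤ ρ ∧ ρ < 1 ∧ IsRhoSpeedable a α ρ

/-- A Solovay test: computable sequences of rationals `l i ≤ r i` in `[0,1]`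
with `Σ (r i - l i) < ∞`. -/
structure SolovayTest where
  l : ℕ → ℚ
  r : ℕ → ℚ
  comp_l : Computable l
  comp_r : Computable r
  mem_l : ∀ i, l i ∈ Set.Icc (0 : ℚ) 1
  mem_r : ∀ i, r i ∈ Set.Icc (0 : ℚ) 1
  le : ∀ i, l i ≤ r i
  summable : Summable (fun i => (r i : ℝ) - (l i : ℝ))

/-- A real `γ` is covered by a Solovay test if `γ ∈ [l i, r i]` for infinitely many `i`. -/
def SolovayTest.Covers (T : SolovayTest) (γ : ℝ) : Prop :=
  ∃ᶠ i in atTop, γ ∈ Set.Icc (T.l i : ℝ) (T.r i : ℝ)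

/-- The sequence of endpoints `l 0, r 0, l 1, r 1, …` of a Solovay test. -/
def SolovayTest.endpoints (T : SolovayTest) (n : ℕ) : ℚ :=
  if n % 2 = 0 then T.l (n / 2) else T.r (n / 2)

/-- A Solovay test is converging if its sequence of endpoints converges. -/
def SolovayTest.Converging (T : SolovayTest) : Prop :=
  ∃ L : ℝ, Tendsto (fun n => (T.endpoints n : ℝ)) atTop (nhds L)

/-!
If the endpoints of a test converge and the test covers `γ`, then their limit is `γ`, because
infinitely many left endpoints are at most `γ` and infinitely many right endpoints are at least `γ`;
so the left endpoints are a computable approximation of `γ`.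

Conversely, let `a` be a computable approximation of `γ` and `T` a test covering `γ`. A rational `γ`
is covered by the constant test `[γ, γ]`. If `γ` is irrational, it lies in the interior of every
interval that contains it, so each index `i` with `γ ∈ [l i, r i]` admits a stage `s ≥ i` with
`a s ∈ [l i, r i]`. The indices admitting such a stage form an infinite c.e. set, which has an
injective computable enumeration `f`. The subtest of `T` with indices `f 0, f 1, …` still covers
`γ`, its intervals contain points `a s` with `s ≥ f n → ∞`, and their widths tend to `0`; hence its
endpoints converge to `γ`.

Mathlib numbers the rationals by the rank of the code of the reduced fraction among all such codes.
The numerator, the denominator and `≤` are computable for this numbering because the `n`-th element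
of an infinite decidable set of natural numbers is computable in `n`.
-/

open Encodable Denumerable

section Computability

variable {α β : Type*} [Primcodable α] [Primcodable β]

theorem computablePred_comp {p : β → Prop} (hp : ComputablePred p) {f : α → β}
    (hf : Computable f) : ComputablePred fun a => p (f a) := by
  classical exact (hp.decide.comp hf).computablePred

theorem computablePred_and {p q : α → Prop} (hp : ComputablePred p) (hq : ComputablePred q) :
    ComputablePred fun a => p a ∧ q a := by
  classical
  exact ((Primrec.and.to_comp.comp hp.decide hq.decide).of_eq fun a => by simp).computablePred

theorem computable_count {p : α → ℕ → Prop} [DecidableRel p]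
    (hp : ComputablePred fun x : α × ℕ => p x.1 x.2) :
    Computable₂ fun a n => Nat.count (p a) n := by
  have hstep : Computable₂ fun (x : α × ℕ) (y : ℕ × ℕ) =>
      bif decide (p x.1 y.1) then y.2 + 1 else y.2 :=
    Computable.cond
      (hp.decide.comp <| (Computable.fst.comp Computable.fst).pair
        (Computable.fst.comp Computable.snd))
      (Computable.succ.comp (Computable.snd.comp Computable.snd))
      (Computable.snd.comp Computable.snd)
  refine (Computable.nat_rec Computable.snd (Computable.const 0) hstep).of_eq fun ⟨a, n⟩ => ?_
  induction n with
  | zero => simp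
  | succ n ih => by_cases h : p a n <;> simp_all [Nat.count_succ]

theorem computable_nth {p : ℕ → Prop} (hp : ComputablePred p) (hinf : {n | p n}.Infinite) :
    Computable (Nat.nth p) := by
  classical
  have hex (n : ℕ) : ∃ k, p k ∧ Nat.count p k = n :=
    ⟨Nat.nth p n, Nat.nth_mem_of_infinite hinf n, Nat.count_nth_of_infinite hinf n⟩
  have hcount : Computable fun k => Nat.count p k :=
    (computable_count (α := Unit) (p := fun _ => p) (computablePred_comp hp .snd)).comp
      (.const ()) .id
  have hgraph : ComputablePred fun x : ℕ × ℕ => p x.2 ∧ Nat.count p x.2 = x.1 :=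
    computablePred_and (computablePred_comp hp .snd)
      (computablePred_comp (Primrec.eq (α := ℕ)).computablePred
        ((hcount.comp Computable.snd).pair Computable.fst))
  refine (Computable.find hgraph hex).of_eq fun n => ?_
  obtain ⟨hmem, hcard⟩ := Nat.find_spec (hex n)
  rw [← Nat.nth_count hmem, hcard]

/-- The codes of the pairs `(i, s)` such that `s` is the least witness of `∃ s, R i s`: a
decidable copy of the c.e. set `{i | ∃ s, R i s}` when `R` is decidable. -/
def leastWitnessCodes (R : ℕ → ℕ → Prop) : Set ℕ :=
  {n | R n.unpair.1 n.unpair.2 ∧ ∀ t < n.unpair.2, ¬R n.unpair.1 t}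

theorem bijOn_leastWitnessCodes (R : ℕ → ℕ → Prop) :
    Set.BijOn (fun n => n.unpair.1) (leastWitnessCodes R) {i | ∃ s, R i s} := by
  refine ⟨fun n hn => ⟨_, hn.1⟩, fun m hm n hn hmn => ?_, fun i hi => ?_⟩
  · have hle {m n : ℕ} (hm : m ∈ leastWitnessCodes R) (hn : n ∈ leastWitnessCodes R)
        (hmn : m.unpair.1 = n.unpair.1) : m.unpair.2 ≤ n.unpair.2 :=
      not_lt.1 fun h => hm.2 _ h (hmn ▸ hn.1)
    rw [← Nat.pair_unpair m, ← Nat.pair_unpair n, Nat.pair_eq_pair]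
    exact ⟨hmn, (hle hm hn hmn).antisymm (hle hn hm hmn.symm)⟩
  · classical
    exact ⟨Nat.pair i (Nat.find hi),
      by simpa [leastWitnessCodes, -Nat.lt_find_iff] using
        ⟨Nat.find_spec hi, fun _ => Nat.find_min hi⟩, by simp⟩

theorem computablePred_mem_leastWitnessCodes {R : ℕ → ℕ → Prop}
    (hR : ComputablePred fun x : ℕ × ℕ => R x.1 x.2) :
    ComputablePred (· ∈ leastWitnessCodes R) := by
  classical
  refine (computablePred_and (computablePred_comp hR .unpair)
    (computablePred_comp (Primrec.eq (α := ℕ)).computablePred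
      (((computable_count hR).comp (Computable.fst.comp .unpair)
        (Computable.snd.comp .unpair)).pair (Computable.const 0)))).of_eq fun n => ?_
  exact and_congr_right fun _ => Nat.count_iff_forall_not

theorem exists_computable_injective_range_eq {R : ℕ → ℕ → Prop}
    (hR : ComputablePred fun x : ℕ × ℕ => R x.1 x.2) (hinf : {i | ∃ s, R i s}.Infinite) :
    ∃ f : ℕ → ℕ, Computable f ∧ Function.Injective f ∧ Set.range f = {i | ∃ s, R i s} := by
  have hbij := bijOn_leastWitnessCodes R
  have hcodes : (leastWitnessCodes R).Infinite :=
    Set.Infinite.of_image (fun n => n.unpair.1) (hbij.image_eq ▸ hinf)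
  refine ⟨fun n => (Nat.nth (· ∈ leastWitnessCodes R) n).unpair.1, ?_, fun m n hmn => ?_, ?_⟩
  · exact (Computable.fst.comp .unpair).comp
      (computable_nth (computablePred_mem_leastWitnessCodes hR) hcodes)
  · exact Nat.nth_injective hcodes <| hbij.injOn (Nat.nth_mem_of_infinite hcodes m)
      (Nat.nth_mem_of_infinite hcodes n) hmn
  · rw [← hbij.image_eq, Set.range_comp' (fun n : ℕ => n.unpair.1),
      Nat.range_nth_of_infinite (p := (· ∈ leastWitnessCodes R)) hcodes]
    rfl

end Computability

section Integers

theorem primrec_gcd : Primrec₂ Nat.gcd := by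
  have hdvd : PrimrecRel fun (x : ℕ × ℕ) (d : ℕ) => d ∣ x.1 ∧ d ∣ x.2 := by
    have hmod {f : (ℕ × ℕ) × ℕ → ℕ} (hf : Primrec f) :
        PrimrecPred fun x : (ℕ × ℕ) × ℕ => x.2 ∣ f x :=
      (Primrec.eq.comp (Primrec.nat_mod.comp hf .snd) (.const 0)).of_eq fun x =>
        (Nat.dvd_iff_mod_eq_zero).symm
    exact (hmod (Primrec.fst.comp .fst)).and (hmod (Primrec.snd.comp .fst))
  refine (Primrec.nat_findGreatest (Primrec.nat_add.comp .fst .snd) hdvd).of_eq fun ⟨a, b⟩ => ?_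
  refine Nat.findGreatest_eq_iff.2
    ⟨?_, fun _ => ⟨Nat.gcd_dvd_left a b, Nat.gcd_dvd_right a b⟩, fun d hlt hle hd => ?_⟩
  · rcases a.eq_zero_or_pos with rfl | ha
    · simp
    · exact (Nat.gcd_le_left b ha).trans (Nat.le_add_right a b)
  · have hpos : 0 < Nat.gcd a b := Nat.pos_of_ne_zero fun h => by
      obtain ⟨rfl, rfl⟩ := Nat.gcd_eq_zero_iff.1 h
      omega
    exact hlt.not_ge (Nat.le_of_dvd hpos (Nat.dvd_gcd hd.1 hd.2))

theorem encode_int_ofNat (m : ℕ) : encode (Int.ofNat m) = 2 * m := rfl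

theorem encode_int_negSucc (m : ℕ) : encode (Int.negSucc m) = 2 * m + 1 := rfl

theorem primrec_int_toNat : Primrec Int.toNat := by
  refine ((Primrec.cond Primrec.nat_bodd (.const 0) Primrec.nat_div2).comp
    Primrec.encode).of_eq fun z => ?_
  cases z with
  | ofNat m => rw [encode_int_ofNat]; simp
  | negSucc m => rw [encode_int_negSucc]; simp

theorem primrec_int_toNat_neg : Primrec fun z : ℤ => (-z).toNat := by
  refine ((Primrec.cond Primrec.nat_bodd (Primrec.succ.comp Primrec.nat_div2) (.const 0)).comp
    Primrec.encode).of_eq fun z => ?_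
  cases z with
  | ofNat m => rw [encode_int_ofNat]; simp
  | negSucc m => rw [encode_int_negSucc]; simp

theorem primrec_int_natAbs : Primrec Int.natAbs :=
  (Primrec.nat_add.comp primrec_int_toNat primrec_int_toNat_neg).of_eq
    Int.toNat_add_toNat_neg_eq_natAbs

end Integers

section Rationals

theorem encode_ofNat_ofEncodableOfInfinite (α : Type*) [Encodable α] [Infinite α] (n : ℕ) :
    encode (@ofNat α (ofEncodableOfInfinite α) n) =
      Nat.nth (· ∈ Set.range (encode : α → ℕ)) n := by
  have hinf : (Set.range (encode : α → ℕ)).Infinite :=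
    Set.infinite_range_of_injective encode_injective
  let := @decidableRangeEncode α _
  let := hinf.to_subtype
  let := Nat.Subtype.denumerable (Set.range (encode : α → ℕ))
  have hofNat : @ofNat α (ofEncodableOfInfinite α) n =
      (equivRangeEncode α).symm (Nat.Subtype.ofNat (Set.range encode) n) :=
    ofEquiv_ofNat _ (equivRangeEncode α) n
  have hnth : Nat.nth (· ∈ Set.range (encode : α → ℕ)) n =
      Nat.Subtype.ofNat (Set.range (encode : α → ℕ)) n :=
    (Nat.nth_apply_eq_orderIsoOfNat (p := (· ∈ Set.range (encode : α → ℕ))) hinf n).trans <|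
      congrArg Subtype.val (Nat.Subtype.orderIsoOfNat_apply (s := Set.range (encode : α → ℕ)))
  rw [hofNat, hnth]
  exact congrArg Subtype.val ((equivRangeEncode α).apply_symm_apply _)

/- `Rat.instEncodable` codes a fraction by its numerator and denominator; the instance found for
`encode (α := ℚ)`, the one underlying `Computable`, is the rank of that code. -/
theorem encode_rat (q : ℚ) :
    @encode ℚ Rat.instEncodable q = Nat.pair (encode q.num) q.den := rfl

theorem mem_range_encode_rat (n : ℕ) :
    n ∈ Set.range (@encode ℚ Rat.instEncodable) ↔
      n.unpair.2 ≠ 0 ∧ Nat.gcd (ofNat ℤ n.unpair.1).natAbs n.unpair.2 = 1 := by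
  constructor
  · rintro ⟨q, rfl⟩
    rw [encode_rat, Nat.unpair_pair, ofNat_encode]
    exact ⟨q.den_nz, q.reduced⟩
  · rintro ⟨hden, hcop⟩
    exact ⟨⟨ofNat ℤ n.unpair.1, n.unpair.2, hden, hcop⟩, by
      rw [encode_rat, encode_ofNat, Nat.pair_unpair]⟩

theorem computable_encode_rat : Computable (@encode ℚ Rat.instEncodable) := by
  have hrange : ComputablePred (· ∈ Set.range (@encode ℚ Rat.instEncodable)) := by
    have hden : Primrec fun n : ℕ => n.unpair.2 := Primrec.snd.comp .unpair
    have hnum : Primrec fun n : ℕ => ofNat ℤ n.unpair.1 :=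
      (Primrec.ofNat ℤ).comp (Primrec.fst.comp .unpair)
    refine (PrimrecPred.and (Primrec.eq.comp hden (.const 0)).not
      (Primrec.eq.comp (primrec_gcd.comp (primrec_int_natAbs.comp hnum) hden)
        (.const 1))).computablePred.of_eq fun n => (mem_range_encode_rat n).symm
  have hinf : (Set.range (@encode ℚ Rat.instEncodable)).Infinite :=
    Set.infinite_range_of_injective (@encode_injective ℚ Rat.instEncodable)
  refine ((computable_nth hrange hinf).comp (Computable.encode (α := ℚ))).of_eq fun q => ?_
  rw [← @encode_ofNat_ofEncodableOfInfinite ℚ Rat.instEncodable]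
  exact congrArg _ (ofNat_encode q)

theorem computable_rat_num : Computable Rat.num :=
  ((Computable.ofNat ℤ).comp (Computable.fst.comp (.comp .unpair computable_encode_rat))).of_eq
    fun q => by rw [encode_rat, Nat.unpair_pair, ofNat_encode]

theorem computable_rat_den : Computable Rat.den :=
  (Computable.snd.comp (.comp .unpair computable_encode_rat)).of_eq fun q => by
    simp [encode_rat]

theorem computablePred_rat_le : ComputablePred fun x : ℚ × ℚ => x.1 ≤ x.2 := by
  have hprod {f : ℤ → ℕ} (hf : Primrec f) :
      Computable₂ fun x y : ℚ => f x.num * y.den :=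
    Primrec.nat_mul.to_comp.comp (hf.to_comp.comp (computable_rat_num.comp .fst))
      (computable_rat_den.comp .snd)
  have hsum : Computable₂ fun x y : ℚ => x.num.toNat * y.den + (-y.num).toNat * x.den :=
    Primrec.nat_add.to_comp.comp (hprod primrec_int_toNat)
      ((hprod primrec_int_toNat_neg).comp .snd .fst)
  refine (computablePred_comp Primrec.nat_le.computablePred
    (hsum.pair (hsum.comp Computable.snd .fst))).of_eq fun ⟨x, y⟩ => ?_
  have hsplit (z : ℤ) (d : ℕ) : z * d = z.toNat * d - (-z).toNat * d := by
    rw [← sub_mul, Int.toNat_sub_toNat_neg]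
  rw [Rat.le_iff, hsplit x.num, hsplit y.num, sub_le_sub_iff]
  norm_cast

end Rationals

namespace SolovayTest

theorem endpoints_two_mul (T : SolovayTest) (i : ℕ) : T.endpoints (2 * i) = T.l i := by
  simp [endpoints]

theorem endpoints_two_mul_add_one (T : SolovayTest) (i : ℕ) :
    T.endpoints (2 * i + 1) = T.r i := by
  simp [endpoints, Nat.mul_add_div]

theorem tendsto_endpoints_iff {T : SolovayTest} {x : ℝ} :
    Tendsto (fun n => (T.endpoints n : ℝ)) atTop (nhds x) ↔
      Tendsto (fun i => (T.l i : ℝ)) atTop (nhds x) ∧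
        Tendsto (fun i => (T.r i : ℝ)) atTop (nhds x) := by
  refine ⟨fun h => ⟨?_, ?_⟩, fun ⟨hl, hr⟩ => ?_⟩
  · have hdouble : Tendsto (fun i : ℕ => 2 * i) atTop atTop :=
      tendsto_atTop_mono (fun i => show i ≤ 2 * i by lia) tendsto_id
    exact (h.comp hdouble).congr fun i => congrArg _ (T.endpoints_two_mul i)
  · have hdouble_succ : Tendsto (fun i : ℕ => 2 * i + 1) atTop atTop :=
      tendsto_atTop_mono (fun i => show i ≤ 2 * i + 1 by lia) tendsto_id
    exact (h.comp hdouble_succ).congr fun i => congrArg _ (T.endpoints_two_mul_add_one i)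
  · have hhalf : Tendsto (fun n : ℕ => n / 2) atTop atTop := Nat.tendsto_div_const_atTop two_ne_zero
    refine ((hl.comp hhalf).if' (hr.comp hhalf) (p := fun n => n % 2 = 0)).congr fun n => ?_
    exact (apply_ite (Rat.cast : ℚ → ℝ) _ _ _).symm

theorem tendsto_endpoints_of_mem_Icc {T : SolovayTest} {u : ℕ → ℝ} {x : ℝ}
    (hmem : ∀ i, u i ∈ Set.Icc (T.l i : ℝ) (T.r i)) (hu : Tendsto u atTop (nhds x)) :
    Tendsto (fun n => (T.endpoints n : ℝ)) atTop (nhds x) := by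
  have hwidth : Tendsto (fun i => (T.r i : ℝ) - T.l i) atTop (nhds 0) :=
    T.summable.tendsto_atTop_zero
  refine tendsto_endpoints_iff.2 ⟨?_, ?_⟩
  · refine tendsto_of_tendsto_of_tendsto_of_le_of_le (by simpa using hu.sub hwidth) hu
      (fun i => ?_) fun i => (hmem i).1
    linarith [(hmem i).2]
  · refine tendsto_of_tendsto_of_tendsto_of_le_of_le hu (by simpa using hu.add hwidth)
      (fun i => (hmem i).2) fun i => ?_
    linarith [(hmem i).1]

theorem Converging.isCompApprox_l {T : SolovayTest} {γ : ℝ} (hconv : T.Converging)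
    (hcov : T.Covers γ) : IsCompApprox T.l γ := by
  obtain ⟨L, hL⟩ := hconv
  obtain ⟨hl, hr⟩ := tendsto_endpoints_iff.1 hL
  obtain rfl : L = γ := le_antisymm
    (le_of_tendsto_of_frequently hl (hcov.mono fun _ h => h.1))
    (ge_of_tendsto_of_frequently hr (hcov.mono fun _ h => h.2))
  exact ⟨T.comp_l, T.mem_l, hl⟩

/-- The test all of whose intervals are `[q, q]`; it covers the rational `q`. -/
def point (q : ℚ) (hq : q ∈ Set.Icc (0 : ℚ) 1) : SolovayTest where
  l _ := q
  r _ := q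
  comp_l := .const q
  comp_r := .const q
  mem_l _ := hq
  mem_r _ := hq
  le _ := le_rfl
  summable := by simp

theorem converging_point {q : ℚ} (hq : q ∈ Set.Icc (0 : ℚ) 1) : (point q hq).Converging :=
  ⟨q, tendsto_endpoints_iff.2 ⟨tendsto_const_nhds, tendsto_const_nhds⟩⟩

theorem covers_point {q : ℚ} (hq : q ∈ Set.Icc (0 : ℚ) 1) : (point q hq).Covers q :=
  Frequently.of_forall fun _ => Set.left_mem_Icc.2 le_rfl

/-- The subtest of `T` consisting of the intervals with indices `f 0, f 1, …`; injectivity of `f`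
keeps the total length finite. -/
def reindex (T : SolovayTest) (f : ℕ → ℕ) (hf : Computable f) (hinj : Function.Injective f) :
    SolovayTest where
  l := T.l ∘ f
  r := T.r ∘ f
  comp_l := T.comp_l.comp hf
  comp_r := T.comp_r.comp hf
  mem_l i := T.mem_l (f i)
  mem_r i := T.mem_r (f i)
  le i := T.le (f i)
  summable := T.summable.comp_injective hinj

theorem covers_reindex_iff {T : SolovayTest} {γ : ℝ} {f : ℕ → ℕ} {hf : Computable f}
    {hinj : Function.Injective f} :
    (T.reindex f hf hinj).Covers γ ↔
      ∃ᶠ i in atTop, i ∈ Set.range f ∧ γ ∈ Set.Icc (T.l i : ℝ) (T.r i) := by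
  have hmap : map f atTop = atTop ⊓ 𝓟 (Set.range f) := by
    rw [← Nat.cofinite_eq_atTop, ← map_comap, hinj.comap_cofinite_eq]
  rw [← frequently_inf_principal, ← hmap, frequently_map]
  rfl

theorem exists_converging_covers_of_frequently_mem_Ioo {T : SolovayTest} {γ : ℝ} {a : ℕ → ℚ}
    (ha : IsCompApprox a γ)
    (hcov : ∃ᶠ i in atTop, γ ∈ Set.Ioo (T.l i : ℝ) (T.r i)) :
    ∃ T' : SolovayTest, T'.Converging ∧ T'.Covers γ := by
  obtain ⟨ha_comp, -, ha_lim⟩ := ha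
  let R (i s : ℕ) : Prop := i ≤ s ∧ T.l i ≤ a s ∧ a s ≤ T.r i
  have hR : ComputablePred fun x : ℕ × ℕ => R x.1 x.2 :=
    computablePred_and Primrec.nat_le.computablePred <| computablePred_and
      (computablePred_comp computablePred_rat_le
        ((T.comp_l.comp Computable.fst).pair (ha_comp.comp .snd)))
      (computablePred_comp computablePred_rat_le
        ((ha_comp.comp Computable.snd).pair (T.comp_r.comp .fst)))
  have hwitness (i : ℕ) (hi : γ ∈ Set.Ioo (T.l i : ℝ) (T.r i)) : ∃ s, R i s := by
    obtain ⟨s, hs, his⟩ :=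
      ((ha_lim.eventually (Ioo_mem_nhds hi.1 hi.2)).and (eventually_ge_atTop i)).exists
    exact ⟨s, his, mod_cast hs.1.le, mod_cast hs.2.le⟩
  obtain ⟨f, hf, hinj, hrange⟩ := exists_computable_injective_range_eq hR <|
    Nat.frequently_atTop_iff_infinite.1 (hcov.mono hwitness)
  have hg (n : ℕ) : ∃ s, R (f n) s := hrange.subset (Set.mem_range_self n)
  choose g hg using hg
  have hg_lim : Tendsto g atTop atTop :=
    tendsto_atTop_mono (fun n => (hg n).1) hinj.nat_tendsto_atTop
  refine ⟨T.reindex f hf hinj, ⟨γ, tendsto_endpoints_of_mem_Icc (u := fun n => a (g n))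
    (fun n => ⟨mod_cast (hg n).2.1, mod_cast (hg n).2.2⟩) (ha_lim.comp hg_lim)⟩, ?_⟩
  exact covers_reindex_iff.2 <| hcov.mono fun i hi =>
    ⟨hrange.superset (hwitness i hi), Set.Ioo_subset_Icc_self hi⟩

end SolovayTest

theorem ca_nonrandom_iff_covered_by_converging_test (γ : ℝ)
    (hγ : γ ∈ Set.Ioo (0 : ℝ) 1) :
    ((∃ a : ℕ → ℚ, IsCompApprox a γ) ∧ ∃ T : SolovayTest, T.Covers γ) ↔
      ∃ T : SolovayTest, T.Converging ∧ T.Covers γ := by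
  constructor
  · rintro ⟨⟨a, ha⟩, T, hcov⟩
    by_cases hirr : Irrational γ
    · exact SolovayTest.exists_converging_covers_of_frequently_mem_Ioo ha <| hcov.mono fun i hi =>
        ⟨hi.1.lt_of_ne (hirr.ne_rat _).symm, hi.2.lt_of_ne (hirr.ne_rat _)⟩
    · obtain ⟨q, rfl⟩ := not_not.1 hirr
      have hq : q ∈ Set.Icc (0 : ℚ) 1 := ⟨mod_cast hγ.1.le, mod_cast hγ.2.le⟩
      exact ⟨.point q hq, SolovayTest.converging_point hq, SolovayTest.covers_point hq⟩
  · rintro ⟨T, hconv, hcov⟩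
    exact ⟨⟨T.l, hconv.isCompApprox_l hcov⟩, T, hcov⟩
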